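/- Let N ≥ 1 and let g be a norm on EuclideanSpace ℝ (Fin N). Let W be the set of all x with g(x) = 1 that admit at least two distinct norming functionals with respect to g. Then the (N−1)-dimensional Hausdorff measure of W (taken with respect to the Euclidean metric) is zero. -/

import Mathlib

/-!
Let `g*` be the supremum of the linear functionals lying below `g`. It is sublinear, hence locally
Lipschitz, and every norming functional of `g` at `x` is one of `g*` at `x`; where `g*` is
differentiable there is only one, the derivative. So it suffices to bound the points of
`{g* = 1}` at which `g*` is not differentiable.

Near a point `e` with `g* e = 1`, choose `φ` with `φ e = 1`. By homogeneity `g*` is differentiable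
at `x` as soon as its restriction to the affine hyperplane `e + ker φ` is differentiable at the
central projection `x / φ x`. By Rademacher's theorem the bad points of this hyperplane are null in
dimension `dim E - 1`, and the radial projection `y ↦ y / g* y`, which is Lipschitz near `e`, maps
them onto a set containing the bad points of `{g* = 1}` near `e`.
-/

open MeasureTheory
open scoped RealInnerProductSpace

/-- `g` is a norm on `EuclideanSpace ℝ (Fin N)`. -/
def IsNorm {N : ℕ} (g : EuclideanSpace ℝ (Fin N) → ℝ) : Prop :=
  (∀ x y, g (x + y) ≤ g x + g y) ∧
  (∀ (c : ℝ) (x), g (c • x) = |c| * g x) ∧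
  (∀ x, g x = 0 → x = 0)

/-- `f` is a norming functional for `x` with respect to `g`:
`⟨f, x⟩ = g x` and `⟨f, y⟩ ≤ g y` for all `y`, where `⟨·,·⟩` is the Euclidean
inner product. -/
def IsNormingFunctional {N : ℕ} (g : EuclideanSpace ℝ (Fin N) → ℝ)
    (f x : EuclideanSpace ℝ (Fin N)) : Prop :=
  ⟪f, x⟫ = g x ∧ ∀ y, ⟪f, y⟫ ≤ g y

open Filter Module Set Topology

theorem ae_differentiableAt_of_locallyLipschitz {E F : Type*} [NormedAddCommGroup E]
    [NormedSpace ℝ E] [FiniteDimensional ℝ E] [MeasurableSpace E] [BorelSpace E]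
    [NormedAddCommGroup F] [NormedSpace ℝ F] [FiniteDimensional ℝ F] {μ : Measure E}
    [μ.IsAddHaarMeasure] {f : E → F} (hf : LocallyLipschitz f) :
    ∀ᵐ x ∂μ, DifferentiableAt ℝ f x := by
  refine measure_null_of_locally_null _ fun x _ ↦ ?_
  obtain ⟨K, t, ht, hKt⟩ := hf x
  obtain ⟨u, hut, hu, hxu⟩ := mem_nhds_iff.1 ht
  refine ⟨u ∩ {y | ¬ DifferentiableAt ℝ f y},
    inter_mem (mem_nhdsWithin_of_mem_nhds (hu.mem_nhds hxu)) self_mem_nhdsWithin, ?_⟩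
  have hae : ∀ᵐ y ∂μ, y ∈ u → DifferentiableWithinAt ℝ f u y :=
    (hKt.mono hut).ae_differentiableWithinAt_of_mem
  refine measure_mono_null ?_ hae
  rintro y ⟨hyu, hy⟩ hdiff
  exact hy ((hdiff hyu).differentiableAt (hu.mem_nhds hyu))

section Projections

variable {E : Type*} [NormedAddCommGroup E] [NormedSpace ℝ E] {φ : StrongDual ℝ E} {e x : E}

/-- The projection of `E` from the origin onto the affine hyperplane `e + ker φ`, read off as a
point of `ker φ`. It is meaningful where `φ` does not vanish, and takes the junk value `0` where it
does. -/
noncomputable def centralProjection (φ : StrongDual ℝ E) (e : E) (he : φ e = 1) (x : E) : φ.ker :=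
  (φ x)⁻¹ • φ.projKerOfRightInverse (.toSpanSingleton ℝ e) (fun c ↦ by simp [he]) x

theorem add_centralProjection (he : φ e = 1) (hx : φ x ≠ 0) :
    e + (centralProjection φ e he x : E) = (φ x)⁻¹ • x := by
  simp [centralProjection, smul_sub, smul_smul, hx]

theorem centralProjection_self (he : φ e = 1) : centralProjection φ e he e = 0 := by
  have h := add_centralProjection he (he ▸ one_ne_zero)
  rw [he, inv_one, one_smul, add_eq_left] at h
  exact Subtype.ext h

theorem differentiableAt_centralProjection (he : φ e = 1) (hx : φ x ≠ 0) :
    DifferentiableAt ℝ (centralProjection φ e he) x :=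
  (φ.differentiableAt.inv hx).smul (ContinuousLinearMap.differentiableAt _)

variable {g : E → ℝ}

theorem differentiableAt_of_differentiableAt_centralProjection
    (hom : ∀ c > 0, ∀ y, g (c • y) = c * g y) (he : φ e = 1) (hx : 0 < φ x)
    (hdiff : DifferentiableAt ℝ (fun v : φ.ker ↦ g (e + v)) (centralProjection φ e he x)) :
    DifferentiableAt ℝ g x := by
  have hcomp : DifferentiableAt ℝ (fun y ↦ φ y * g (e + centralProjection φ e he y)) x :=
    φ.differentiableAt.mul
      (hdiff.comp (f := centralProjection φ e he) x (differentiableAt_centralProjection he hx.ne'))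
  refine hcomp.congr_of_eventuallyEq ?_
  filter_upwards [φ.continuous.continuousAt.eventually_const_lt hx] with y hy
  rw [add_centralProjection he hy.ne', hom _ (inv_pos.2 hy), mul_inv_cancel_left₀ hy.ne']

theorem exists_lipschitzOnWith_inv_smul (hg : LocallyLipschitz g) (he : g e ≠ 0) :
    ∃ K, ∃ t ∈ 𝓝 e, LipschitzOnWith K (fun x ↦ (g x)⁻¹ • x) t := by
  have hsmooth : ContDiffAt ℝ 1 (fun p : ℝ × E ↦ p.1⁻¹ • p.2) (g e, e) :=
    (contDiffAt_fst.inv he).smul contDiffAt_snd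
  obtain ⟨K, s, hs, hK⟩ := hsmooth.exists_lipschitzOnWith
  have hgraph : LocallyLipschitz fun x ↦ (g x, x) := hg.prodMk .id
  obtain ⟨L, t, ht, hL⟩ := hgraph e
  exact ⟨K * L, t ∩ (fun x ↦ (g x, x)) ⁻¹' s,
    inter_mem ht (hgraph.continuous.continuousAt.preimage_mem_nhds hs),
    hK.comp (hL.mono inter_subset_left) fun _ hx ↦ hx.2⟩

theorem inv_smul_smul_of_eq_one (hom : ∀ c > 0, ∀ y, g (c • y) = c * g y) (hx : g x = 1) {c : ℝ}
    (hc : 0 < c) : (g (c • x))⁻¹ • c • x = x := by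
  rw [hom c hc, hx, mul_one, inv_smul_smul₀ hc.ne']

end Projections

section FiniteDimensional

variable {E : Type*} [NormedAddCommGroup E] [NormedSpace ℝ E] [FiniteDimensional ℝ E]

theorem finrank_sub_one_eq_finrank_ker {φ : StrongDual ℝ E} (hφ : φ ≠ 0) :
    (finrank ℝ E - 1 : ℝ) = finrank ℝ φ.ker := by
  rw [← Dual.finrank_ker_add_one_of_ne_zero (f := φ.toLinearMap) (mod_cast hφ)]
  push_cast
  ring

variable [MeasurableSpace E] [BorelSpace E]

theorem hausdorffMeasure_ker_not_differentiableAt_eq_zero {F : Type*} [NormedAddCommGroup F]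
    [NormedSpace ℝ F] [FiniteDimensional ℝ F] {f : E → F} (hf : LocallyLipschitz f)
    {φ : StrongDual ℝ E} (hφ : φ ≠ 0) (e : E) :
    μH[finrank ℝ E - 1] {v : φ.ker | ¬ DifferentiableAt ℝ (fun w : φ.ker ↦ f (e + w)) v} = 0 := by
  have hrestrict : LocallyLipschitz fun w : φ.ker ↦ f (e + w) :=
    hf.comp ((isometry_add_left e).comp isometry_subtype_coe).lipschitz.locallyLipschitz
  rw [finrank_sub_one_eq_finrank_ker hφ]
  exact ae_differentiableAt_of_locallyLipschitz hrestrict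

theorem hausdorffMeasure_image_add_ker_eq_zero {F : Type*} [EMetricSpace F] [MeasurableSpace F]
    [BorelSpace F] {f : E → F} {φ : StrongDual ℝ E} (hφ : φ ≠ 0) {e : E} {K : NNReal} {t : Set E}
    (hK : LipschitzOnWith K f t) {s : Set φ.ker} (hs : μH[finrank ℝ E - 1] s = 0)
    (hst : ∀ v ∈ s, e + (v : E) ∈ t) :
    μH[finrank ℝ E - 1] ((fun v : φ.ker ↦ f (e + v)) '' s) = 0 := by
  have htranslate : LipschitzWith 1 fun v : φ.ker ↦ e + (v : E) :=
    ((isometry_add_left e).comp isometry_subtype_coe).lipschitz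
  have hcomp : LipschitzOnWith (K * 1) (fun v : φ.ker ↦ f (e + v)) s :=
    hK.comp htranslate.lipschitzOnWith hst
  have hdim : (0 : ℝ) ≤ finrank ℝ E - 1 := by
    rw [finrank_sub_one_eq_finrank_ker hφ]
    positivity
  refine nonpos_iff_eq_zero.1 ((hcomp.hausdorffMeasure_image_le hdim).trans_eq ?_)
  rw [hs, mul_zero]

theorem exists_mem_nhds_hausdorffMeasure_not_differentiableAt_eq_zero {g : E → ℝ}
    (hg : LocallyLipschitz g) (hom : ∀ c > 0, ∀ y, g (c • y) = c * g y) {φ : StrongDual ℝ E}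
    {e : E} (he : φ e = 1) (hge : g e ≠ 0) :
    ∃ u ∈ 𝓝 e, μH[finrank ℝ E - 1] (u ∩ {x | g x = 1 ∧ ¬ DifferentiableAt ℝ g x}) = 0 := by
  have hφ : φ ≠ 0 := by rintro rfl; simp at he
  have he_pos : 0 < φ e := he ▸ one_pos
  obtain ⟨K, t, ht, hK⟩ := exists_lipschitzOnWith_inv_smul hg hge
  let bad : Set φ.ker := {v | e + (v : E) ∈ t ∧ ¬ DifferentiableAt ℝ (fun w : φ.ker ↦ g (e + w)) v}
  have hbad : μH[finrank ℝ E - 1] bad = 0 := measure_mono_null (fun _ hv ↦ hv.2)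
    (hausdorffMeasure_ker_not_differentiableAt_eq_zero hg hφ e)
  have hcont : ContinuousAt (fun x ↦ e + (centralProjection φ e he x : E)) e :=
    continuousAt_const.add (continuous_subtype_val.continuousAt.comp
      (differentiableAt_centralProjection he he_pos.ne').continuousAt)
  have hproj : ∀ᶠ x in 𝓝 e, e + (centralProjection φ e he x : E) ∈ t :=
    hcont.preimage_mem_nhds (by simpa [centralProjection_self] using ht)
  refine ⟨_, (φ.continuous.continuousAt.eventually_const_lt he_pos).and hproj,
    measure_mono_null ?_ (hausdorffMeasure_image_add_ker_eq_zero hφ hK hbad fun _ hv ↦ hv.1)⟩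
  rintro x ⟨⟨hx, hxt⟩, hgx, hdiff⟩
  refine ⟨centralProjection φ e he x, ⟨hxt, fun h ↦
    hdiff (differentiableAt_of_differentiableAt_centralProjection hom he hx h)⟩, ?_⟩
  simp only [add_centralProjection he hx.ne']
  exact inv_smul_smul_of_eq_one hom hgx (inv_pos.2 hx)

theorem hausdorffMeasure_not_differentiableAt_eq_zero {g : E → ℝ} (hg : LocallyLipschitz g)
    (hom : ∀ c > 0, ∀ y, g (c • y) = c * g y) :
    μH[finrank ℝ E - 1] {x | g x = 1 ∧ ¬ DifferentiableAt ℝ g x} = 0 := by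
  have hzero : g 0 = 0 := by
    have hdouble := hom 2 two_pos 0
    rw [smul_zero] at hdouble
    linarith
  refine measure_null_of_locally_null _ fun e ⟨hge, _⟩ ↦ ?_
  have he : e ≠ 0 := by rintro rfl; simp [hzero] at hge
  obtain ⟨φ, hφ⟩ := SeparatingDual.exists_eq_one (R := ℝ) he
  obtain ⟨u, hu, hnull⟩ := exists_mem_nhds_hausdorffMeasure_not_differentiableAt_eq_zero hg hom hφ
    (hge ▸ one_ne_zero)
  exact ⟨_, inter_mem (mem_nhdsWithin_of_mem_nhds hu) self_mem_nhdsWithin, hnull⟩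

end FiniteDimensional

section Envelope

theorem convexOn_iSup {E ι : Type*} [AddCommMonoid E] [Module ℝ E] [Nonempty ι] {s : Set E}
    {f : ι → E → ℝ} (hf : ∀ i, ConvexOn ℝ s (f i))
    (hbdd : ∀ x ∈ s, BddAbove (range fun i ↦ f i x)) : ConvexOn ℝ s fun x ↦ ⨆ i, f i x := by
  refine ⟨(hf (Classical.arbitrary ι)).1, fun x hx y hy a b ha hb hab ↦ ciSup_le fun i ↦ ?_⟩
  calc f i (a • x + b • y) ≤ a • f i x + b • f i y := (hf i).2 hx hy ha hb hab
    _ ≤ a • (⨆ j, f j x) + b • ⨆ j, f j y := by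
      gcongr
      exacts [le_ciSup (hbdd x hx) i, le_ciSup (hbdd y hy) i]

variable {E : Type*} [NormedAddCommGroup E] [NormedSpace ℝ E] {g : E → ℝ} {f : StrongDual ℝ E}
  {x : E}

/-- `f` is a norming functional for `x` with respect to `g`, as in `IsNormingFunctional`, but with
`f` a continuous linear functional instead of a vector representing it and with `g` an arbitrary
function. -/
def IsDualNormingFunctional (g : E → ℝ) (f : StrongDual ℝ E) (x : E) : Prop :=
  f x = g x ∧ ∀ y, f y ≤ g y

theorem IsDualNormingFunctional.eq_fderiv (hf : IsDualNormingFunctional g f x)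
    (hg : DifferentiableAt ℝ g x) : f = fderiv ℝ g x := by
  have hmin : IsLocalMin (fun y ↦ g y - f y) x :=
    Eventually.of_forall fun y ↦ by simpa [hf.1] using hf.2 y
  have hderiv := hmin.hasFDerivAt_eq_zero (hg.hasFDerivAt.sub f.hasFDerivAt)
  exact (sub_eq_zero.1 hderiv).symm

/-- The pointwise supremum of the continuous linear functionals lying below `g`; when there is no
such functional it has the junk value `0`. It replaces `g` by a sublinear function with the same
norming functionals wherever `g` has any. -/
noncomputable def linearEnvelope (g : E → ℝ) (x : E) : ℝ :=
  ⨆ f : {f : StrongDual ℝ E // ∀ y, f y ≤ g y}, f.1 x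

theorem bddAbove_range_minorants (g : E → ℝ) (x : E) :
    BddAbove (range fun f : {f : StrongDual ℝ E // ∀ y, f y ≤ g y} ↦ f.1 x) :=
  ⟨g x, forall_mem_range.2 fun f ↦ f.2 x⟩

theorem linearEnvelope_smul_of_nonneg (g : E → ℝ) {c : ℝ} (hc : 0 ≤ c) (x : E) :
    linearEnvelope g (c • x) = c * linearEnvelope g x := by
  simp only [linearEnvelope, Real.mul_iSup_of_nonneg hc, map_smul, smul_eq_mul]

theorem convexOn_linearEnvelope (g : E → ℝ) : ConvexOn ℝ univ (linearEnvelope g) := by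
  rcases isEmpty_or_nonempty {f : StrongDual ℝ E // ∀ y, f y ≤ g y} with _ | _
  · have hzero : linearEnvelope g = fun _ ↦ 0 := funext fun _ ↦ Real.iSup_of_isEmpty _
    exact hzero ▸ convexOn_const 0 convex_univ
  · exact convexOn_iSup (fun f ↦ f.1.toLinearMap.convexOn convex_univ) fun x _ ↦
      bddAbove_range_minorants g x

theorem IsDualNormingFunctional.linearEnvelope_eq (hf : IsDualNormingFunctional g f x) :
    linearEnvelope g x = g x := by
  have : Nonempty {f : StrongDual ℝ E // ∀ y, f y ≤ g y} := ⟨⟨f, hf.2⟩⟩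
  refine le_antisymm (ciSup_le fun f' ↦ f'.2 x) ?_
  exact hf.1.symm.trans_le (le_ciSup (bddAbove_range_minorants g x) ⟨f, hf.2⟩)

theorem IsDualNormingFunctional.linearEnvelope (hf : IsDualNormingFunctional g f x) :
    IsDualNormingFunctional (linearEnvelope g) f x :=
  ⟨hf.1.trans hf.linearEnvelope_eq.symm, fun y ↦
    le_ciSup (bddAbove_range_minorants g y) ⟨f, hf.2⟩⟩

end Envelope

theorem hausdorff_measure_nonsmooth_points_eq_zero_general {E : Type*} [NormedAddCommGroup E]
    [NormedSpace ℝ E] [FiniteDimensional ℝ E] [MeasurableSpace E] [BorelSpace E] (g : E → ℝ) :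
    μH[finrank ℝ E - 1] {x | g x = 1 ∧ ∃ f f', f ≠ f' ∧
      IsDualNormingFunctional g f x ∧ IsDualNormingFunctional g f' x} = 0 := by
  refine measure_mono_null ?_ (hausdorffMeasure_not_differentiableAt_eq_zero
    (convexOn_linearEnvelope g).locallyLipschitz fun c hc ↦ linearEnvelope_smul_of_nonneg g hc.le)
  rintro x ⟨hgx, f, f', hne, hf, hf'⟩
  refine ⟨hf.linearEnvelope_eq.trans hgx, fun hdiff ↦ hne ?_⟩
  rw [hf.linearEnvelope.eq_fderiv hdiff, hf'.linearEnvelope.eq_fderiv hdiff]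

theorem IsNormingFunctional.toDual {N : ℕ} {g : EuclideanSpace ℝ (Fin N) → ℝ}
    {f x : EuclideanSpace ℝ (Fin N)} (hf : IsNormingFunctional g f x) :
    IsDualNormingFunctional g (InnerProductSpace.toDual ℝ _ f) x := by
  simpa only [IsDualNormingFunctional, IsNormingFunctional, InnerProductSpace.toDual_apply_apply]
    using hf

theorem hausdorff_measure_nonsmooth_points_eq_zero {N : ℕ} (hN : 1 ≤ N)
    (g : EuclideanSpace ℝ (Fin N) → ℝ) (hg : IsNorm g) :
    μH[N - 1] {x : EuclideanSpace ℝ (Fin N) | g x = 1 ∧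
      ∃ f f', f ≠ f' ∧ IsNormingFunctional g f x ∧ IsNormingFunctional g f' x} = 0 := by
  have hnull := hausdorff_measure_nonsmooth_points_eq_zero_general g
  rw [finrank_euclideanSpace_fin] at hnull
  refine measure_mono_null ?_ hnull
  rintro x ⟨hgx, f, f', hne, hf, hf'⟩
  exact ⟨hgx, _, _, (InnerProductSpace.toDual ℝ _).injective.ne hne, hf.toDual, hf'.toDual⟩
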